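/- On F ⊗ F ⊗ F, with k invertible (k⁻¹|m⟩ = q^{−m}|m⟩), define the operators ξ₁ = (1−q²)⁻¹ (a⁺k⁻¹ ⊗ 1 ⊗ 1) and ξ₂ = (1−q²)⁻¹ (a⁻ ⊗ a⁺k⁻¹ ⊗ 1 + k ⊗ k⁻¹ ⊗ a⁺k⁻¹). In the renormalized basis |a,b,c⟩⟩ = d_a d_b d_c |a⟩⊗|b⟩⊗|c⟩, where d_m = q^{−m(m−1)/2}(1−q²)^{−m}, these satisfy ξ₁|a,b,c⟩⟩ = |a+1,b,c⟩⟩ and ξ₂|a,b,c⟩⟩ = [a]₁ |a−1,b+1,c⟩⟩ + q^{a−b} |a,b,c+1⟩⟩ for all a,b,c ∈ ℕ (the term with index a−1 = −1 being absent since [0]₁ = 0). In particular ξ₁, ξ₂ act on the renormalized basis by exactly the same structure constants as left multiplication by e₁, e₂ on the PBW monomials of U_q⁺(A₂). -/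

import Mathlib

/-!
In the renormalized one-particle basis `|m⟩⟩ = d_m |m⟩` the operators `k`, `k⁻¹` stay diagonal,
while `d_{m+1} = d_m q^{-m} (1 - q²)⁻¹` turns the raising operator `a⁺k⁻¹` into `(1 - q²)` times
the shift `|m⟩⟩ ↦ |m+1⟩⟩` and the lowering operator `a⁻` into `|m⟩⟩ ↦ [m]₁ |m-1⟩⟩`. Since `|a,b,c⟩⟩`
is the pure tensor `|a⟩⟩ ⊗ |b⟩⟩ ⊗ |c⟩⟩`, the prefactor `(1 - q²)⁻¹` of `ξ₁`, `ξ₂` cancels the factor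
created by the one raising operator in each summand.
-/

noncomputable section

/-- The base field `K = ℚ(q)`, rational functions over `ℚ`. -/
abbrev K : Type := RatFunc ℚ

/-- The indeterminate `q`. -/
def q : K := RatFunc.X

/-- The Fock space `F` with basis `|m⟩, m ∈ ℕ`. -/
abbrev F : Type := ℕ →₀ K

/-- The basis vector `|m⟩`. -/
def ket (m : ℕ) : F := Finsupp.single m 1

/-- The operator `k : |m⟩ ↦ q^m |m⟩`. -/
def opK : Module.End K F := Finsupp.lift F K ℕ fun m => (q ^ m) • ket m

/-- The operator `a⁺ : |m⟩ ↦ |m+1⟩`. -/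
def opAp : Module.End K F := Finsupp.lift F K ℕ fun m => ket (m + 1)

/-- The operator `a⁻ : |m⟩ ↦ (1 - q^{2m}) |m-1⟩` (so `a⁻|0⟩ = 0`). -/
def opAm : Module.End K F := Finsupp.lift F K ℕ fun m => (1 - q ^ (2 * m)) • ket (m - 1)

/-- The inverse `k⁻¹ : |m⟩ ↦ q^{-m} |m⟩` of the operator `k`. -/
def opKInv : Module.End K F := Finsupp.lift F K ℕ fun m => (q ^ m)⁻¹ • ket m

/-- The `q`-integer `[m]₁ = (q^m - q^{-m})/(q - q⁻¹)`. -/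
def qint (n : ℕ) : K := (q ^ n - q⁻¹ ^ n) / (q - q⁻¹)

open TensorProduct

/-- The triple tensor product `F ⊗ F ⊗ F`. -/
abbrev T3 : Type := F ⊗[K] (F ⊗[K] F)

instance : AddCommGroup T3 := by
  exact @TensorProduct.addCommGroup K _ F (F ⊗[K] F) _ _ _ _

/-- `f ⊗ g ⊗ h` as an operator on `F ⊗ F ⊗ F`. -/
def tens3 (f g h : Module.End K F) : Module.End K T3 :=
  TensorProduct.map f (TensorProduct.map g h)

/-- The operator `ξ₁ = (1−q²)⁻¹ (a⁺k⁻¹ ⊗ 1 ⊗ 1)`. -/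
def xi1 : Module.End K T3 := (1 - q ^ 2)⁻¹ • tens3 (opAp * opKInv) 1 1

/-- The operator `ξ₂ = (1−q²)⁻¹ (a⁻ ⊗ a⁺k⁻¹ ⊗ 1 + k ⊗ k⁻¹ ⊗ a⁺k⁻¹)`. -/
def xi2 : Module.End K T3 :=
  (1 - q ^ 2)⁻¹ • (tens3 opAm (opAp * opKInv) 1 + tens3 opK opKInv (opAp * opKInv))

/-- The renormalization factor `d_m = q^{−m(m−1)/2}(1−q²)^{−m}`. -/
def dcoef (m : ℕ) : K := (q ^ (m * (m - 1) / 2) * (1 - q ^ 2) ^ m)⁻¹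

/-- The renormalized basis vector `|a,b,c⟩⟩ = d_a d_b d_c |a⟩⊗|b⟩⊗|c⟩`. -/
def kett (a b c : ℕ) : T3 :=
  (dcoef a * dcoef b * dcoef c) • (ket a ⊗ₜ[K] (ket b ⊗ₜ[K] ket c))

theorem q_ne_zero : q ≠ 0 := RatFunc.X_ne_zero

theorem one_sub_q_pow_ne_zero {n : ℕ} (hn : n ≠ 0) : 1 - q ^ n ≠ 0 := by
  have h : (1 - Polynomial.X ^ n : Polynomial ℚ) ≠ 0 := by
    rw [← neg_sub, neg_ne_zero]
    exact Polynomial.X_pow_sub_C_ne_zero (Nat.pos_of_ne_zero hn) 1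
  simpa only [q, map_sub, map_one, map_pow, RatFunc.algebraMap_X] using
    RatFunc.algebraMap_ne_zero h

theorem qint_zero : qint 0 = 0 := by simp [qint]

theorem qint_succ (m : ℕ) :
    qint (m + 1) = (1 - q ^ (2 * (m + 1))) * (q ^ m)⁻¹ * (1 - q ^ 2)⁻¹ := by
  have hq := q_ne_zero
  have hq2 := one_sub_q_pow_ne_zero two_ne_zero
  have hden : q - q⁻¹ = -(1 - q ^ 2) * q⁻¹ := by
    field_simp
    ring
  rw [qint, hden, inv_pow]
  field_simp
  ring

theorem dcoef_succ (m : ℕ) : dcoef (m + 1) = dcoef m * (q ^ m)⁻¹ * (1 - q ^ 2)⁻¹ := by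
  rw [dcoef, dcoef, Nat.triangle_succ, pow_add, pow_succ (1 - q ^ 2)]
  simp only [mul_inv]
  ring

theorem lift_ket {M : Type*} [AddCommMonoid M] [Module K M] (f : ℕ → M) (m : ℕ) :
    Finsupp.lift M K ℕ f (ket m) = f m := by
  simp only [ket, Finsupp.lift_apply, Finsupp.sum_single_index, zero_smul, one_smul]

theorem opK_ket (m : ℕ) : opK (ket m) = q ^ m • ket m := lift_ket _ m

theorem opKInv_ket (m : ℕ) : opKInv (ket m) = (q ^ m)⁻¹ • ket m := lift_ket _ m

theorem opAp_ket (m : ℕ) : opAp (ket m) = ket (m + 1) := lift_ket _ m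

theorem opAm_ket (m : ℕ) : opAm (ket m) = (1 - q ^ (2 * m)) • ket (m - 1) := lift_ket _ m

/-- The renormalized one-particle basis vector `|m⟩⟩ = d_m |m⟩`, of which `kett` is the threefold
tensor product. -/
def rket (m : ℕ) : F := dcoef m • ket m

theorem opK_rket (m : ℕ) : opK (rket m) = q ^ m • rket m := by
  rw [rket, map_smul, opK_ket, smul_comm]

theorem opKInv_rket (m : ℕ) : opKInv (rket m) = (q ^ m)⁻¹ • rket m := by
  rw [rket, map_smul, opKInv_ket, smul_comm]

theorem opAp_mul_opKInv_rket (m : ℕ) :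
    (opAp * opKInv) (rket m) = (1 - q ^ 2) • rket (m + 1) := by
  have hcoef : (1 - q ^ 2) * dcoef (m + 1) = (q ^ m)⁻¹ * dcoef m := by
    rw [dcoef_succ]
    field_simp [one_sub_q_pow_ne_zero two_ne_zero]
  rw [Module.End.mul_apply, opKInv_rket, map_smul, rket, map_smul, opAp_ket, rket, smul_smul,
    smul_smul, hcoef]

theorem opAm_rket (m : ℕ) : opAm (rket m) = qint m • rket (m - 1) := by
  rw [rket, map_smul, opAm_ket, rket, smul_smul, smul_smul]
  congr 1
  cases m with
  | zero => simp [qint_zero]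
  | succ m =>
    rw [Nat.add_sub_cancel, dcoef_succ, qint_succ]
    ring

theorem kett_eq_tmul (a b c : ℕ) : kett a b c = rket a ⊗ₜ[K] (rket b ⊗ₜ[K] rket c) := by
  simp only [kett, rket, TensorProduct.smul_tmul_smul, mul_assoc]

theorem tens3_tmul (f g h : Module.End K F) (x y z : F) :
    tens3 f g h (x ⊗ₜ[K] (y ⊗ₜ[K] z)) = f x ⊗ₜ[K] (g y ⊗ₜ[K] h z) := by
  rw [tens3, TensorProduct.map_tmul, TensorProduct.map_tmul]

theorem tens3_opAp_mul_opKInv_one_one_kett (a b c : ℕ) :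
    tens3 (opAp * opKInv) 1 1 (kett a b c) = (1 - q ^ 2) • kett (a + 1) b c := by
  rw [kett_eq_tmul, tens3_tmul, opAp_mul_opKInv_rket, Module.End.one_apply, Module.End.one_apply,
    ← TensorProduct.smul_tmul', kett_eq_tmul]

theorem tens3_opAm_opAp_mul_opKInv_one_kett (a b c : ℕ) :
    tens3 opAm (opAp * opKInv) 1 (kett a b c)
      = (1 - q ^ 2) • qint a • kett (a - 1) (b + 1) c := by
  rw [kett_eq_tmul, tens3_tmul, opAm_rket, opAp_mul_opKInv_rket, Module.End.one_apply,
    ← TensorProduct.smul_tmul', ← TensorProduct.smul_tmul', TensorProduct.tmul_smul, smul_comm,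
    kett_eq_tmul]

theorem tens3_opK_opKInv_opAp_mul_opKInv_kett (a b c : ℕ) :
    tens3 opK opKInv (opAp * opKInv) (kett a b c)
      = (1 - q ^ 2) • q ^ ((a : ℤ) - b) • kett a b (c + 1) := by
  have hweight : q ^ ((a : ℤ) - b) = q ^ a * (q ^ b)⁻¹ := by
    rw [zpow_sub₀ q_ne_zero, zpow_natCast, zpow_natCast, div_eq_mul_inv]
  rw [kett_eq_tmul, tens3_tmul, opK_rket, opKInv_rket, opAp_mul_opKInv_rket,
    TensorProduct.smul_tmul_smul, TensorProduct.smul_tmul, hweight, kett_eq_tmul]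
  simp only [TensorProduct.tmul_smul, smul_smul]
  congr 1
  ring

/-- the action of `ξ₁, ξ₂` on the renormalized basis reproduces the
structure constants of left multiplication by `e₁, e₂` on PBW monomials of `U_q⁺(A₂)`.
(The term with index `a−1 = −1` is absent since `[0]₁ = 0`; truncated subtraction
on `ℕ` realizes this convention.) -/
theorem statement9 (a b c : ℕ) :
    xi1 (kett a b c) = kett (a + 1) b c ∧
    xi2 (kett a b c)
      = qint a • kett (a - 1) (b + 1) c + (q ^ ((a : ℤ) - b)) • kett a b (c + 1) := by
  have hq2 : 1 - q ^ 2 ≠ 0 := one_sub_q_pow_ne_zero two_ne_zero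
  constructor
  · rw [xi1, LinearMap.smul_apply, tens3_opAp_mul_opKInv_one_one_kett,
      inv_smul_smul₀ hq2]
  · rw [xi2, LinearMap.smul_apply, LinearMap.add_apply, tens3_opAm_opAp_mul_opKInv_one_kett,
      tens3_opK_opKInv_opAp_mul_opKInv_kett, ← smul_add, inv_smul_smul₀ hq2]
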